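/- arXiv:2312.16103 — 6 statements merged into one kernel-verified Lean document; each statement's English description precedes it below -/
import Mathlib

section
/- Let p be a probability mass function on ℕ with finite mean β := Σ_{k≥0} k·p(k) < ∞. Then the Shannon entropy H(p) := Σ_{k≥0} −p(k)·log p(k) is finite and satisfies H(p) ≤ (β + 1)·log 2. -/
/-- **Entropy bound via comparison with Geometric(1/2).**
If `p` is a probability mass function on `ℕ` with finite mean `β`, then the Shannon
entropy `H(p) = ∑ₖ -(p k * log (p k))` is finite (i.e. the series is summable) and
`H(p) ≤ (β + 1) * log 2`.  (The convention `0 * log 0 = 0` is automatic since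
`Real.log 0 = 0` in Lean.) -/
theorem entropy_le_of_finite_mean (p : ℕ → ℝ)
    (hp0 : ∀ k, 0 ≤ p k) (hp1 : HasSum p 1)
    (hmean : Summable fun k : ℕ => (k : ℝ) * p k) :
    Summable (fun k => -(p k * Real.log (p k))) ∧
      ∑' k, -(p k * Real.log (p k)) ≤ ((∑' k : ℕ, (k : ℝ) * p k) + 1) * Real.log 2 := by
  have hq : HasSum (fun k : ℕ => (1 : ℝ) / 2 / 2 ^ k) 1 := hasSum_geometric_two' 1
  have hle1 : ∀ k, p k ≤ 1 := fun k => le_hasSum hp1 k (fun j _ => hp0 j)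
  have hpt : ∀ k : ℕ, -(p k * Real.log (p k)) ≤
      ((k : ℝ) * p k + p k) * Real.log 2 + (1 / 2 / 2 ^ k - p k) := by
    intro k
    rcases (hp0 k).eq_or_lt with h | h
    · rw [← h]
      simp
      positivity
    · have hqpos : (0 : ℝ) < 1 / 2 / 2 ^ k := by positivity
      have h1 := Real.log_le_sub_one_of_pos (div_pos hqpos h)
      have h2 : Real.log ((1 : ℝ) / 2 / 2 ^ k) = -((k : ℝ) + 1) * Real.log 2 := by
        rw [Real.log_div (by norm_num) (by positivity), Real.log_pow,
          Real.log_div (by norm_num) (by norm_num), Real.log_one]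
        ring
      rw [Real.log_div hqpos.ne' h.ne', h2] at h1
      have h3 := mul_le_mul_of_nonneg_left h1 h.le
      have h4 : p k * ((1 : ℝ) / 2 / 2 ^ k / p k - 1) = 1 / 2 / 2 ^ k - p k := by
        rw [mul_sub, mul_div_cancel₀ _ h.ne', mul_one]
      rw [h4] at h3
      linarith
  have hR := ((hmean.hasSum.add hp1).mul_right (Real.log 2)).add (hq.sub hp1)
  have hS : Summable (fun k => -(p k * Real.log (p k))) := by
    refine Summable.of_nonneg_of_le (fun k => ?_) hpt hR.summable
    have := mul_nonneg (hp0 k) (neg_nonneg.2 (Real.log_nonpos (hp0 k) (hle1 k)))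
    linarith
  refine ⟨hS, ?_⟩
  have := hasSum_le hpt hS.hasSum hR
  linarith
end

section
/- Let ρ be a probability mass function on ℕ with mean β := Σ_{k≥0} k·ρ(k) ∈ (0,∞) and suppose Σ_{k≥0} ρ(k)·k·log k = ∞. Let Poi_β denote the Poisson distribution Poi_β(k) := e^{−β}·β^k/k!. Then the relative entropy H(ρ ‖ Poi_β) = Σ_{k≥0} ρ(k)·log(ρ(k)/Poi_β(k)) equals +∞; more precisely, the negative parts satisfy Σ_{k≥0} ρ(k)·max(0, −log(ρ(k)/Poi_β(k))) < ∞ while Σ_{k≥0} ρ(k)·max(0, log(ρ(k)/Poi_β(k))) = ∞. -/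
/-- **Infinite relative entropy with respect to Poisson when `k log k` moment is infinite.**
Let `ρ` be a pmf on `ℕ` with mean `β ∈ (0, ∞)` and with
`∑ₖ ρ k * (k * log k) = ∞` (i.e. the series of these nonnegative terms is not summable).
Let `Poiβ k = exp (-β) * β ^ k / k!`.  Then the relative entropy
`H(ρ ‖ Poiβ) = ∑ₖ ρ k * log (ρ k / Poiβ k)` is `+∞`: the negative parts
`ρ k * max 0 (-(log (ρ k / Poiβ k)))` form a summable series, while the positive parts
`ρ k * max 0 (log (ρ k / Poiβ k))` do not. -/
theorem relEnt_poisson_eq_top_of_klogk_infinite (ρ : ℕ → ℝ) (β : ℝ)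
    (hρ0 : ∀ k, 0 ≤ ρ k) (hρ1 : HasSum ρ 1)
    (hmean : Summable fun k : ℕ => (k : ℝ) * ρ k)
    (hβ : β = ∑' k : ℕ, (k : ℝ) * ρ k) (hβpos : 0 < β)
    (hklogk : ¬ Summable fun k : ℕ => ρ k * ((k : ℝ) * Real.log (k : ℝ))) :
    (Summable fun k : ℕ =>
        ρ k * max 0 (-(Real.log (ρ k / (Real.exp (-β) * β ^ k / (Nat.factorial k : ℝ)))))) ∧
      ¬ Summable fun k : ℕ =>
        ρ k * max 0 (Real.log (ρ k / (Real.exp (-β) * β ^ k / (Nat.factorial k : ℝ)))) := by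
  have hp : ∀ k : ℕ, 0 < Real.exp (-β) * β ^ k / (Nat.factorial k : ℝ) := fun k => by positivity
  have hfac : ∀ k : ℕ, (k : ℝ) * Real.log k - k ≤ Real.log (Nat.factorial k : ℝ) := by
    intro k
    rcases Nat.eq_zero_or_pos k with rfl | hk
    · simp
    have hk' : (0 : ℝ) < k := by exact_mod_cast hk
    have h := Real.pow_div_factorial_le_exp (k : ℝ) hk'.le k
    have hf : (0 : ℝ) < (Nat.factorial k : ℝ) := by positivity
    have h2 := Real.log_le_log (by positivity) h
    rw [Real.log_exp, Real.log_div (by positivity) hf.ne', Real.log_pow] at h2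
    linarith
  -- Gibbs-type pointwise bound
  have gibbs : ∀ x q : ℝ, 0 < x → 0 < q → x * (Real.log q - Real.log x) ≤ q := by
    intro x q hx hq
    have h := Real.log_le_sub_one_of_pos (div_pos hq hx)
    rw [Real.log_div hq.ne' hx.ne'] at h
    have h2 := mul_le_mul_of_nonneg_left h hx.le
    have h3 : x * (q / x - 1) = q - x := by field_simp
    linarith
  constructor
  · have hs : Summable fun k : ℕ => Real.exp (-β) * β ^ k / (Nat.factorial k : ℝ) := by
      have := (Real.summable_pow_div_factorial β).mul_left (Real.exp (-β))
      simpa only [mul_div_assoc] using this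
    refine Summable.of_nonneg_of_le
      (fun k => mul_nonneg (hρ0 k) (le_max_left _ _)) (fun k => ?_) hs
    rcases (hρ0 k).eq_or_lt with h0 | h0
    · rw [← h0, zero_mul]; exact (hp k).le
    · rw [mul_max_of_nonneg _ _ h0.le, mul_zero]
      refine max_le (hp k).le ?_
      rw [Real.log_div h0.ne' (hp k).ne', neg_sub]
      exact gibbs _ _ h0 (hp k)
  · intro hpos
    apply hklogk
    have hexp : Summable fun k : ℕ => Real.exp (-(k : ℝ)) := Real.summable_exp_neg_nat
    refine Summable.of_nonneg_of_le (fun k => ?_) (fun k => ?_)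
      ((hpos.add hexp).add (hmean.mul_left (2 + |Real.log β|)))
    · exact mul_nonneg (hρ0 k) (mul_nonneg (Nat.cast_nonneg k) (Real.log_natCast_nonneg k))
    · rcases (hρ0 k).eq_or_lt with h0 | h0
      · simp only [← h0, zero_mul, mul_zero, add_zero, zero_add]
        positivity
      · have h1 := gibbs (ρ k) (Real.exp (-(k : ℝ))) h0 (Real.exp_pos _)
        rw [Real.log_exp] at h1
        have h2 : Real.log (ρ k / (Real.exp (-β) * β ^ k / (Nat.factorial k : ℝ)))
            = Real.log (ρ k) + β - k * Real.log β + Real.log (Nat.factorial k : ℝ) := by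
          rw [Real.log_div h0.ne' (hp k).ne', Real.log_div (by positivity) (by positivity),
            Real.log_mul (by positivity) (by positivity), Real.log_exp, Real.log_pow]
          ring
        have h3 := mul_le_mul_of_nonneg_left (le_max_right 0
          (Real.log (ρ k / (Real.exp (-β) * β ^ k / (Nat.factorial k : ℝ))))) h0.le
        have h4 := mul_le_mul_of_nonneg_left (hfac k) h0.le
        have h5 := mul_le_mul_of_nonneg_left (le_abs_self (Real.log β))
          (mul_nonneg (Nat.cast_nonneg (α := ℝ) k) h0.le)
        have h6 := mul_pos h0 hβpos
        have h7 := congrArg (fun t => ρ k * t) h2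
        nlinarith
end

section
/- Under the stated setup, if Σ_{n=0}^M n·α(n) · Σ_{x∈𝒳} ν(x)·h(x) < c < κ·max_{x∈𝒳} h(x), then there exists λ > 0 such that g(λ) = c. -/
/-- **Existence of a positive tilting parameter.**
In the Gibbs setup (nonempty finite `𝒳`, strictly positive pmf `ν`, pmf `α` on
`{0, …, M}` with mean `κ > 0`, `h : 𝒳 → ℝ`,
`g λ = ∑_{n=0}^M ∑_x n·α n·ν x·h x·exp (λ·n·h x) / (∑_y ν y·exp (λ·n·h y))`),
if `g 0 = (∑_n n·α n)·(∑_x ν x·h x) < c < κ·max_x h x`, then there exists `λ > 0`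
with `g λ = c`. -/
theorem gibbs_exists_lambda
    {𝒳 : Type} [Fintype 𝒳] [Nonempty 𝒳]
    (ν : 𝒳 → ℝ) (hν0 : ∀ x, 0 < ν x) (hν1 : ∑ x, ν x = 1)
    (M : ℕ) (α : ℕ → ℝ) (hα0 : ∀ n, 0 ≤ α n)
    (hα1 : ∑ n ∈ Finset.range (M + 1), α n = 1)
    (κ : ℝ) (hκdef : κ = ∑ n ∈ Finset.range (M + 1), (n : ℝ) * α n) (hκpos : 0 < κ)
    (h : 𝒳 → ℝ) (g : ℝ → ℝ)
    (hg : ∀ lam : ℝ, g lam =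
      ∑ n ∈ Finset.range (M + 1), ∑ x,
        (n : ℝ) * α n * ν x * h x * Real.exp (lam * n * h x) /
          (∑ y, ν y * Real.exp (lam * n * h y)))
    (c : ℝ)
    (hc1 : (∑ n ∈ Finset.range (M + 1), (n : ℝ) * α n) * (∑ x, ν x * h x) < c)
    (hc2 : c < κ * Finset.univ.sup' Finset.univ_nonempty h) :
    ∃ lam : ℝ, 0 < lam ∧ g lam = c := by
  obtain ⟨xs, -, hxs⟩ := Finset.exists_mem_eq_sup' Finset.univ_nonempty h
  have hle : ∀ x, h x ≤ h xs := fun x => by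
    rw [← hxs]; exact Finset.le_sup' h (Finset.mem_univ x)
  rw [hxs] at hc2
  have hZ : ∀ (lam : ℝ) (n : ℕ), 0 < ∑ y, ν y * Real.exp (lam * n * h y) := fun lam n =>
    Finset.sum_pos (fun y _ => mul_pos (hν0 y) (Real.exp_pos _)) Finset.univ_nonempty
  have hcont : Continuous g := by
    rw [show g = _ from funext hg]
    refine continuous_finsetSum _ fun n _ => continuous_finsetSum _ fun x _ => ?_
    refine Continuous.div (by fun_prop) (by fun_prop) fun lam => (hZ lam n).ne'
  have hg0 : g 0 < c := by
    refine lt_of_eq_of_lt ?_ hc1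
    rw [hg, Finset.sum_mul]
    refine Finset.sum_congr rfl fun n _ => ?_
    rw [Finset.mul_sum]
    refine Finset.sum_congr rfl fun x _ => ?_
    simp [hν1, mul_assoc]
  have key : ∀ lam : ℝ, 0 < lam → κ * h xs - g lam ≤ 1 / (lam * ν xs) := by
    intro lam hlam
    have hpos : 0 < lam * ν xs := mul_pos hlam (hν0 xs)
    rw [hg, hκdef, Finset.sum_mul, ← Finset.sum_sub_distrib, ← hα1, Finset.sum_div]
    refine Finset.sum_le_sum fun n _ => ?_
    have hz := hZ lam n
    have h1 : (n : ℝ) * α n * h xs - ∑ x, (n : ℝ) * α n * ν x * h x * Real.exp (lam * n * h x) /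
          (∑ y, ν y * Real.exp (lam * n * h y))
        = α n * (∑ x, ν x * (n * (h xs - h x) * Real.exp (lam * n * h x))) /
          (∑ y, ν y * Real.exp (lam * n * h y)) := by
      rw [← Finset.sum_div, eq_div_iff hz.ne', sub_mul, div_mul_cancel₀ _ hz.ne',
        Finset.mul_sum, Finset.mul_sum, ← Finset.sum_sub_distrib]
      refine Finset.sum_congr rfl fun x _ => ?_
      ring
    rw [h1, div_le_div_iff₀ hz hpos]
    have h2 : lam * (∑ x, ν x * (n * (h xs - h x) * Real.exp (lam * n * h x)))
        ≤ Real.exp (lam * n * h xs) := by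
      calc _ = ∑ x, ν x * (lam * n * (h xs - h x) * Real.exp (lam * n * h x)) := by
            rw [Finset.mul_sum]
            exact Finset.sum_congr rfl fun x _ => by ring
        _ ≤ ∑ x, ν x * Real.exp (lam * n * h xs) := by
            refine Finset.sum_le_sum fun x _ => mul_le_mul_of_nonneg_left ?_ (hν0 x).le
            have h3 : lam * n * (h xs - h x) ≤ Real.exp (lam * n * (h xs - h x)) := by
              linarith [Real.add_one_le_exp (lam * n * (h xs - h x))]
            calc _ ≤ Real.exp (lam * n * (h xs - h x)) * Real.exp (lam * n * h x) :=
                  mul_le_mul_of_nonneg_right h3 (Real.exp_pos _).le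
              _ = _ := by rw [← Real.exp_add]; congr 1; ring
        _ = _ := by rw [← Finset.sum_mul, hν1, one_mul]
    have h4 : ν xs * Real.exp (lam * n * h xs) ≤ ∑ y, ν y * Real.exp (lam * n * h y) :=
      Finset.single_le_sum (f := fun y => ν y * Real.exp (lam * n * h y))
        (fun y _ => (mul_pos (hν0 y) (Real.exp_pos _)).le) (Finset.mem_univ xs)
    have h5 := mul_le_mul_of_nonneg_left
      ((mul_le_mul_of_nonneg_left h2 (hν0 xs).le).trans h4) (hα0 n)
    linarith
  have hd : 0 < κ * h xs - c := by linarith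
  have hν := hν0 xs
  set L : ℝ := 1 / ((κ * h xs - c) * ν xs) with hL
  have hLpos : 0 < L := by positivity
  have hgL : c ≤ g L := by
    have := key L hLpos
    have e : 1 / (L * ν xs) = κ * h xs - c := by
      rw [hL]; field_simp
    linarith
  obtain ⟨t, ht, hte⟩ := intermediate_value_Icc hLpos.le hcont.continuousOn ⟨hg0.le, hgL⟩
  refine ⟨t, lt_of_le_of_ne ht.1 ?_, hte⟩
  rintro rfl
  exact hg0.ne hte
end

section
/- Let 𝒳 be a nonempty finite set, ν a probability mass function on 𝒳, M ∈ ℕ, α a probability mass function on {0,1,…,M}, h : 𝒳 → ℝ, c ∈ ℝ, and λ > 0. Define the tilted probability mass function γ on {0,1,…,M}×𝒳 by γ(n,x) := α(n)·ν(x)·exp(λ·n·h(x)) / (Σ_{y∈𝒳} ν(y)·exp(λ·n·h(y))), and assume Σ_{n=0}^M Σ_{x∈𝒳} n·h(x)·γ(n,x) = c. Then for every probability mass function γ′ on {0,1,…,M}×𝒳 satisfying Σ_{x∈𝒳} γ′(n,x) = α(n) for all n ∈ {0,…,M} and Σ_{n=0}^M Σ_{x∈𝒳} n·h(x)·γ′(n,x)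 ≥ c, one has H(γ′ ‖ α⊗ν) ≥ H(γ ‖ α⊗ν), with equality if and only if γ′ = γ. -/
open scoped BigOperators ENNReal Classical

noncomputable section

/-- Relative entropy `H(p ‖ q) = ∑ₛ p s * log (p s / q s)` of two probability mass
functions on a countable set, with value `∞` when `p` is not absolutely continuous with
respect to `q` (or the defining series diverges); the convention `0·log 0 = 0` is
automatic since `Real.log 0 = 0`. -/
def relEnt {S : Type*} (p q : S → ℝ) : ℝ≥0∞ :=
  if (∀ s, q s = 0 → p s = 0) ∧ Summable (fun s => p s * Real.log (p s / q s)) then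
    ENNReal.ofReal (∑' s, p s * Real.log (p s / q s))
  else ⊤

theorem gibbs_pt_le (a b : ℝ) (ha : 0 ≤ a) (hb : 0 ≤ b) (hab : b = 0 → a = 0) :
    a - b ≤ a * Real.log (a / b) ∧ (a * Real.log (a / b) = a - b → a = b) := by
  rcases ha.eq_or_lt with h0 | ha
  · subst h0
    simp only [zero_sub, zero_div, Real.log_zero, mul_zero]
    exact ⟨by linarith, fun h => by linarith⟩
  · have hb' : 0 < b := lt_of_le_of_ne hb (fun h => ha.ne' (hab h.symm))
    have e : Real.log (a / b) = - Real.log (b / a) := by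
      rw [← Real.log_inv, inv_div]
    have e2 : a * (b / a - 1) = b - a := by field_simp
    have hp : 0 < b / a := by positivity
    constructor
    · have := mul_le_mul_of_nonneg_left (Real.log_le_sub_one_of_pos hp) ha.le
      rw [e]; linarith
    · intro heq
      by_contra hne
      have h1 : b / a ≠ 1 := by
        intro h; rw [div_eq_one_iff_eq ha.ne'] at h; exact hne h.symm
      have := mul_lt_mul_of_pos_left (Real.log_lt_sub_one_of_pos hp h1) ha
      rw [e] at heq; linarith

theorem gibbs_sum {S : Type*} (F : Finset S) (a b : S → ℝ) (ha : ∀ s, 0 ≤ a s) (hb : ∀ s, 0 ≤ b s)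
    (hab : ∀ s, b s = 0 → a s = 0) (hs : ∑ s ∈ F, a s = ∑ s ∈ F, b s) :
    0 ≤ ∑ s ∈ F, a s * Real.log (a s / b s) ∧
      (∑ s ∈ F, a s * Real.log (a s / b s) = 0 → ∀ s ∈ F, a s = b s) := by
  have h0 : ∑ s ∈ F, (a s - b s) = 0 := by rw [Finset.sum_sub_distrib, hs, sub_self]
  have hp := fun s => gibbs_pt_le (a s) (b s) (ha s) (hb s) (hab s)
  constructor
  · rw [← h0]; exact Finset.sum_le_sum fun s _ => (hp s).1
  · intro h s hsF
    rw [← h0] at h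
    have := (Finset.sum_eq_sum_iff_of_le (fun s _ => (hp s).1)).1 h.symm s hsF
    exact (hp s).2 this.symm

theorem relEnt_of_finset {S : Type*} (F : Finset S) (p q : S → ℝ) (hp : ∀ s, s ∉ F → p s = 0)
    (hac : ∀ s, q s = 0 → p s = 0) :
    relEnt p q = ENNReal.ofReal (∑ s ∈ F, p s * Real.log (p s / q s)) := by
  have hz : ∀ s, s ∉ F → p s * Real.log (p s / q s) = 0 := fun s hs => by simp [hp s hs]
  unfold relEnt
  rw [if_pos ⟨hac, summable_of_ne_finset_zero (s := F) (fun s hs => hz s hs)⟩,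
    tsum_eq_sum (s := F) (fun s hs => hz s hs)]

/-- **The exponentially tilted law minimizes relative entropy under the constraints.**
Let `𝒳` be a nonempty finite set, `ν` a pmf on `𝒳`, `α` a pmf on `{0, …, M}`,
`h : 𝒳 → ℝ`, `c ∈ ℝ`, `λ > 0`, and define the tilted pmf
`γ (n, x) = α n · ν x · exp (λ·n·h x) / ∑_y ν y · exp (λ·n·h y)`, assumed to satisfy
`∑_{n,x} n · h x · γ (n, x) = c`.  Then every pmf `γ'` on `{0, …, M} × 𝒳` with
`∑_x γ' (n, x) = α n` for all `n` and `∑_{n,x} n · h x · γ' (n, x) ≥ c` satisfies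
`H(γ' ‖ α ⊗ ν) ≥ H(γ ‖ α ⊗ ν)`, with equality iff `γ' = γ`. -/
theorem tilted_minimizes_relative_entropy
    {𝒳 : Type} [Fintype 𝒳] [Nonempty 𝒳]
    (ν : 𝒳 → ℝ) (hν0 : ∀ x, 0 ≤ ν x) (hν1 : ∑ x, ν x = 1)
    (M : ℕ) (α : ℕ → ℝ) (hα0 : ∀ n, 0 ≤ α n) (hαsupp : ∀ n, M < n → α n = 0)
    (hα1 : ∑ n ∈ Finset.range (M + 1), α n = 1)
    (h : 𝒳 → ℝ) (c lam : ℝ) (hlam : 0 < lam)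
    (γ : ℕ × 𝒳 → ℝ)
    (hγdef : ∀ n x, γ (n, x) =
      α n * ν x * Real.exp (lam * n * h x) / ∑ y, ν y * Real.exp (lam * n * h y))
    (hγc : ∑ n ∈ Finset.range (M + 1), ∑ x, (n : ℝ) * h x * γ (n, x) = c)
    (γ' : ℕ × 𝒳 → ℝ) (hγ'0 : ∀ p, 0 ≤ γ' p)
    (hγ'supp : ∀ n x, M < n → γ' (n, x) = 0)
    (hγ'marg : ∀ n ≤ M, ∑ x, γ' (n, x) = α n)
    (hγ'c : c ≤ ∑ n ∈ Finset.range (M + 1), ∑ x, (n : ℝ) * h x * γ' (n, x)) :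
    relEnt γ (fun p : ℕ × 𝒳 => α p.1 * ν p.2) ≤ relEnt γ' (fun p : ℕ × 𝒳 => α p.1 * ν p.2) ∧
      (relEnt γ' (fun p : ℕ × 𝒳 => α p.1 * ν p.2) = relEnt γ (fun p : ℕ × 𝒳 => α p.1 * ν p.2)
        ↔ γ' = γ) := by
  have hZ : ∀ n : ℕ, 0 < ∑ y, ν y * Real.exp (lam * n * h y) := by
    intro n
    have hnn : ∀ y ∈ Finset.univ, 0 ≤ ν y * Real.exp (lam * n * h y) :=
      fun y _ => mul_nonneg (hν0 y) (Real.exp_pos _).le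
    refine lt_of_le_of_ne (Finset.sum_nonneg hnn) (fun h0 => ?_)
    have h1 := (Finset.sum_eq_zero_iff_of_nonneg hnn).1 h0.symm
    have h2 : ∑ x, ν x = 0 := Finset.sum_eq_zero fun x hx =>
      (mul_eq_zero.1 (h1 x hx)).resolve_right (Real.exp_pos _).ne'
    linarith
  set Z : ℕ → ℝ := fun n => ∑ y, ν y * Real.exp (lam * n * h y) with hZdef
  set q : ℕ × 𝒳 → ℝ := fun p => α p.1 * ν p.2 with hq
  set F : Finset (ℕ × 𝒳) := Finset.range (M + 1) ×ˢ Finset.univ with hF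
  set g : ℕ × 𝒳 → ℝ := fun p => lam * p.1 * h p.2 - Real.log (Z p.1) with hg
  have hq0 : ∀ s, 0 ≤ q s := fun s => mul_nonneg (hα0 _) (hν0 _)
  have hγq : ∀ s, γ s = q s * Real.exp (g s) := by
    rintro ⟨n, x⟩
    rw [hγdef]
    simp only [hq, hg, Real.exp_sub]
    rw [mul_div_assoc, Real.exp_log (show 0 < Z n from hZ n)]
  have hγ0 : ∀ s, 0 ≤ γ s := fun s => by
    rw [hγq]; exact mul_nonneg (hq0 s) (Real.exp_pos _).le
  have hγac : ∀ s, q s = 0 → γ s = 0 := fun s hs => by rw [hγq, hs, zero_mul]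
  have hqγ : ∀ s, γ s = 0 → q s = 0 := fun s hs => by
    rw [hγq] at hs; exact (mul_eq_zero.1 hs).resolve_right (Real.exp_pos _).ne'
  have hout : ∀ s : ℕ × 𝒳, s ∉ F → M < s.1 := by
    intro s hs
    simp only [hF, Finset.mem_product, Finset.mem_range, Finset.mem_univ, and_true] at hs
    omega
  have hγF : ∀ s, s ∉ F → γ s = 0 := fun s hs =>
    hγac s (by simp [hq, hαsupp _ (hout s hs)])
  have hγ'F : ∀ s, s ∉ F → γ' s = 0 := fun s hs => hγ'supp s.1 s.2 (hout s hs)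
  have hγmarg : ∀ n, ∑ x, γ (n, x) = α n := by
    intro n
    simp_rw [hγdef, ← Finset.sum_div, mul_assoc (α n), ← Finset.mul_sum]
    exact mul_div_cancel_right₀ _ (hZ n).ne'
  have hsumF : ∀ f : ℕ × 𝒳 → ℝ, ∑ s ∈ F, f s = ∑ n ∈ Finset.range (M + 1), ∑ x, f (n, x) :=
    fun f => Finset.sum_product _ _ _
  have hγS : ∑ s ∈ F, γ s = 1 := by
    rw [hsumF, ← hα1]; exact Finset.sum_congr rfl fun n _ => hγmarg n
  have hγ'S : ∑ s ∈ F, γ' s = 1 := by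
    rw [hsumF, ← hα1]
    exact Finset.sum_congr rfl fun n hn => hγ'marg n (by have := Finset.mem_range.1 hn; omega)
  have hqS : ∑ s ∈ F, q s = 1 := by
    rw [hsumF, ← hα1]
    exact Finset.sum_congr rfl fun n _ => by simp only [hq]; rw [← Finset.mul_sum, hν1, mul_one]
  have hlin : ∀ f : ℕ × 𝒳 → ℝ, (∀ n ≤ M, ∑ x, f (n, x) = α n) → ∑ s ∈ F, f s * g s =
      lam * (∑ n ∈ Finset.range (M + 1), ∑ x, (n : ℝ) * h x * f (n, x)) -
        ∑ n ∈ Finset.range (M + 1), α n * Real.log (Z n) := by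
    intro f hf
    rw [hsumF, Finset.mul_sum, ← Finset.sum_sub_distrib]
    refine Finset.sum_congr rfl fun n hn => ?_
    rw [← hf n (by have := Finset.mem_range.1 hn; omega), Finset.mul_sum, Finset.sum_mul,
      ← Finset.sum_sub_distrib]
    refine Finset.sum_congr rfl fun x _ => ?_
    simp only [hg]; ring
  have hdec : ∀ f : ℕ × 𝒳 → ℝ, (∀ s, q s = 0 → f s = 0) →
      ∑ s ∈ F, f s * Real.log (f s / q s) =
        ∑ s ∈ F, f s * Real.log (f s / γ s) + ∑ s ∈ F, f s * g s := by
    intro f hf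
    rw [← Finset.sum_add_distrib]
    refine Finset.sum_congr rfl fun s _ => ?_
    by_cases h0 : f s = 0
    · simp [h0]
    · have hqs : q s ≠ 0 := fun h => h0 (hf s h)
      rw [hγq, Real.log_div h0 hqs, Real.log_div h0 (mul_ne_zero hqs (Real.exp_pos _).ne'),
        Real.log_mul hqs (Real.exp_pos _).ne', Real.log_exp]
      ring
  have hKγ0 := (gibbs_sum F γ q hγ0 hq0 hγac (by rw [hγS, hqS])).1
  have hself : ∑ s ∈ F, γ s * Real.log (γ s / γ s) = 0 := Finset.sum_eq_zero fun s _ => by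
    by_cases h0 : γ s = 0
    · simp [h0]
    · simp [div_self h0]
  have hKγ := hdec γ hγac
  rw [hself, zero_add, hlin γ (fun n _ => hγmarg n), hγc] at hKγ
  have hRγ := relEnt_of_finset F γ q hγF hγac
  by_cases hac : ∀ s, q s = 0 → γ' s = 0
  · have hR' := relEnt_of_finset F γ' q hγ'F hac
    have hK' := hdec γ' hac
    rw [hlin γ' hγ'marg] at hK'
    obtain ⟨hG, hGeq⟩ := gibbs_sum F γ' γ hγ'0 hγ0 (fun s hs => hac s (hqγ s hs))
      (by rw [hγS, hγ'S])
    have hm := mul_le_mul_of_nonneg_left hγ'c hlam.le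
    refine ⟨?_, ?_, fun he => by rw [he]⟩
    · rw [hRγ, hR']
      exact ENNReal.ofReal_le_ofReal (by linarith)
    · intro heq
      rw [hRγ, hR', ENNReal.ofReal_eq_ofReal_iff (by linarith) (by linarith)] at heq
      have h0 := hGeq (by linarith)
      funext s
      by_cases hs : s ∈ F
      · exact h0 s hs
      · rw [hγF s hs, hγ'F s hs]
  · have hR' : relEnt γ' q = ⊤ := by
      unfold relEnt; rw [if_neg (fun h => hac h.1)]
    refine ⟨by rw [hR']; exact le_top, fun heq => ?_, fun he => by rw [he]⟩
    rw [hR', hRγ] at heq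
    exact absurd heq.symm ENNReal.ofReal_ne_top
end
end

section
/- Let μ be a probability mass function on T₁ with 0 < β := Σ_τ μ(τ)·deg(τ) < ∞, and let η₁ be the law on T₁ with degree distribution Q and i.i.d. marks, where Q has finite nonzero mean. If μ is absolutely continuous with respect to η₁, then μ̄^{1,o} is absolutely continuous with respect to η̄₁^{1,o}, and consequently H(μ̄^{1,o} ‖ η̄₁^{1,o}) < ∞. -/
open scoped BigOperators ENNReal Classical

noncomputable section

/-- Depth-1 rooted marked trees: the root mark together with the multiset of
(vertex mark, edge mark toward the root, edge mark at the root) triples of the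
neighbors of the root. -/
abbrev T1 (𝒳 𝒴 : Type) : Type := 𝒳 × Multiset (𝒳 × 𝒴 × 𝒴)

section Defs

variable {𝒳 𝒴 : Type} [Fintype 𝒳] [Fintype 𝒴] [DecidableEq 𝒳] [DecidableEq 𝒴]

/-- Degree of the root of a depth-1 tree. -/
def deg (τ : T1 𝒳 𝒴) : ℕ := Multiset.card τ.2

/-- Symmetrized edge-mark distribution `ξ̄(y, y') = (ξ(y, y') + ξ(y', y)) / 2`. -/
def xiBar (ξ : 𝒴 × 𝒴 → ℝ) (y y' : 𝒴) : ℝ := (ξ (y, y') + ξ (y', y)) / 2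

/-- Multinomial coefficient `card m ! / ∏ₛ (multiplicity of s in m)!`. -/
def ordCoeff (m : Multiset (𝒳 × 𝒴 × 𝒴)) : ℝ :=
  (Nat.factorial (Multiset.card m) : ℝ) /
    ∏ s ∈ m.toFinset, (Nat.factorial (m.count s) : ℝ)

/-- The law `η₁` on `T1` with root-degree distribution `Q` and i.i.d. marks:
`η₁ (x, m) = ν x · Q (card m) · (card m)!/∏ₛ count s !· ∏_{(a,y,y') ∈ m} ν a · ξ̄ y y'`. -/
def eta1 (ν : 𝒳 → ℝ) (ξ : 𝒴 × 𝒴 → ℝ) (Q : ℕ → ℝ) (τ : T1 𝒳 𝒴) : ℝ :=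
  ν τ.1 * Q (Multiset.card τ.2) * ordCoeff τ.2 *
    (τ.2.map fun p => ν p.1 * xiBar ξ p.2.1 p.2.2).prod

/-- Mean root degree `β = ∑_τ μ τ · deg τ`. -/
def meanDeg (μ : T1 𝒳 𝒴 → ℝ) : ℝ := ∑' τ : T1 𝒳 𝒴, μ τ * (deg τ : ℝ)

/-- The neighbor–root marginal `μ̄^{1,o}`:
`μ̄^{1,o} ((a,y), (b,y')) = (1/β) ∑_{m} μ (b, m) · (multiplicity of (a,y,y') in m)`. -/
def nbrRoot (μ : T1 𝒳 𝒴 → ℝ) (p : (𝒳 × 𝒴) × (𝒳 × 𝒴)) : ℝ :=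
  (1 / meanDeg μ) *
    ∑' m : Multiset (𝒳 × 𝒴 × 𝒴), μ (p.2.1, m) * (m.count (p.1.1, p.1.2, p.2.2) : ℝ)

/-- First marginal `μ̄¹` of `μ̄^{1,o}`. -/
def marg1 (μ : T1 𝒳 𝒴 → ℝ) (u : 𝒳 × 𝒴) : ℝ := ∑ v : 𝒳 × 𝒴, nbrRoot μ (u, v)

/-- Second marginal `μ̄ᵒ` of `μ̄^{1,o}`. -/
def margO (μ : T1 𝒳 𝒴 → ℝ) (v : 𝒳 × 𝒴) : ℝ := ∑ u : 𝒳 × 𝒴, nbrRoot μ (u, v)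

/-- Conditional law `μ̄^{1|o} (u | v) = μ̄^{1,o}(u,v) / μ̄ᵒ(v)` (and `0` if `μ̄ᵒ(v) = 0`). -/
def condNbr (μ : T1 𝒳 𝒴 → ℝ) (u v : 𝒳 × 𝒴) : ℝ :=
  if 0 < margO μ v then nbrRoot μ (u, v) / margO μ v else 0

/-- `μ̌ (x, m) = η₁ (x, m) · ∏_{(a,y,y') ∈ m} μ̄¹(a,y) / η̄₁¹(a,y)` (product with
multiplicity; in Lean a ratio with zero denominator is `0`). -/
def muCheck (ν : 𝒳 → ℝ) (ξ : 𝒴 × 𝒴 → ℝ) (Q : ℕ → ℝ) (μ : T1 𝒳 𝒴 → ℝ) (τ : T1 𝒳 𝒴) : ℝ :=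
  eta1 ν ξ Q τ *
    (τ.2.map fun p => marg1 μ (p.1, p.2.1) / marg1 (eta1 ν ξ Q) (p.1, p.2.1)).prod

/-- `μ̂ (x, m) = η₁ (x, m) · ∏_{(a,y,y') ∈ m} μ̄^{1|o}((a,y)|(x,y')) / η̄₁^{1|o}((a,y)|(x,y'))`
(product with multiplicity; a ratio with zero denominator is `0`). -/
def muHat (ν : 𝒳 → ℝ) (ξ : 𝒴 × 𝒴 → ℝ) (Q : ℕ → ℝ) (μ : T1 𝒳 𝒴 → ℝ) (τ : T1 𝒳 𝒴) : ℝ :=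
  eta1 ν ξ Q τ *
    (τ.2.map fun p =>
      condNbr μ (p.1, p.2.1) (τ.1, p.2.2) /
        condNbr (eta1 ν ξ Q) (p.1, p.2.1) (τ.1, p.2.2)).prod

end Defs

lemma aux_summable_mult {𝒳 𝒴 : Type} [Fintype 𝒳] [Fintype 𝒴] [DecidableEq 𝒳] [DecidableEq 𝒴]
    (Q : ℕ → ℝ) (hQ0 : ∀ k, 0 ≤ Q k)
    (hQm : Summable fun k : ℕ => (k : ℝ) * Q k)
    (w : 𝒳 × 𝒴 × 𝒴 → ℝ) (hw0 : ∀ p, 0 ≤ w p) (hw1 : ∑ p, w p = 1) :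
    Summable fun m : Multiset (𝒳 × 𝒴 × 𝒴) =>
      Q (Multiset.card m) * ordCoeff m * (m.map w).prod * (Multiset.card m : ℝ) := by
  have hord : ∀ m : Multiset (𝒳 × 𝒴 × 𝒴), ordCoeff m = (m.countPerms : ℝ) := by
    intro m
    unfold ordCoeff
    rw [div_eq_iff (Finset.prod_ne_zero_iff.2 fun s _ => by positivity)]
    have h := Nat.multinomial_spec m.toFinset (fun s => m.count s)
    rw [Multiset.toFinset_sum_count_eq] at h
    have h2 : m.countPerms = Nat.multinomial m.toFinset (fun s => m.count s) := by
      simp only [Multiset.countPerms, Finsupp.multinomial_eq, Multiset.toFinsupp_support]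
      rfl
    rw [h2, ← h]
    push_cast
    ring
  have hp0 : ∀ m : Multiset (𝒳 × 𝒴 × 𝒴), 0 ≤ (m.map w).prod := by
    intro m
    apply Multiset.prod_nonneg
    intro a ha
    obtain ⟨b, _, rfl⟩ := Multiset.mem_map.1 ha
    exact hw0 b
  rw [← (Equiv.sigmaFiberEquiv (Multiset.card (α := 𝒳 × 𝒴 × 𝒴))).summable_iff]
  rw [summable_sigma_of_nonneg]
  · have hfin : ∀ n, Finite {m : Multiset (𝒳 × 𝒴 × 𝒴) // Multiset.card m = n} := fun n =>
      inferInstanceAs (Finite (Sym (𝒳 × 𝒴 × 𝒴) n))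
    refine ⟨fun n => ?_, ?_⟩
    · have := hfin n
      exact Summable.of_finite
    · convert hQm using 2 with n
      have h := Finset.sum_pow (s := (Finset.univ : Finset (𝒳 × 𝒴 × 𝒴))) w n
      rw [hw1, one_pow] at h
      change ∑' m : Sym (𝒳 × 𝒴 × 𝒴) n, _ = _
      rw [tsum_fintype]
      rw [Finset.sym_univ] at h
      rw [← mul_one ((n : ℝ) * Q n), h, Finset.mul_sum]
      refine Finset.sum_congr rfl fun m _ => ?_
      have hm : Multiset.card m.1 = n := m.2
      change Q (Multiset.card m.1) * ordCoeff m.1 * (m.1.map w).prod * (Multiset.card m.1 : ℝ)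
        = (n : ℝ) * Q n * ((m.1.countPerms : ℝ) * (m.1.map w).prod)
      rw [hord, hm]
      ring
  · rintro ⟨n, m, hm⟩
    simp only [Function.comp, Equiv.sigmaFiberEquiv_apply, hord]
    have := hp0 m
    have := hQ0 (Multiset.card m)
    positivity

lemma aux_summable {𝒳 𝒴 : Type} [Fintype 𝒳] [Fintype 𝒴] [DecidableEq 𝒳] [DecidableEq 𝒴]
    (ν : 𝒳 → ℝ) (hν0 : ∀ x, 0 ≤ ν x) (hν1 : ∑ x, ν x = 1)
    (ξ : 𝒴 × 𝒴 → ℝ) (hξ0 : ∀ p, 0 ≤ ξ p) (hξ1 : ∑ p : 𝒴 × 𝒴, ξ p = 1)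
    (Q : ℕ → ℝ) (hQ0 : ∀ k, 0 ≤ Q k)
    (hQm : Summable fun k : ℕ => (k : ℝ) * Q k) :
    (∀ τ : T1 𝒳 𝒴, 0 ≤ eta1 ν ξ Q τ) ∧
    Summable fun τ : T1 𝒳 𝒴 => eta1 ν ξ Q τ * (deg τ : ℝ) := by
  have hx0 : ∀ p : 𝒳 × 𝒴 × 𝒴, 0 ≤ ν p.1 * xiBar ξ p.2.1 p.2.2 := by
    intro p
    have := hν0 p.1
    have := hξ0 (p.2.1, p.2.2)
    have := hξ0 (p.2.2, p.2.1)
    unfold xiBar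
    positivity
  have hx1 : ∑ p : 𝒳 × 𝒴 × 𝒴, ν p.1 * xiBar ξ p.2.1 p.2.2 = 1 := by
    have e1 : ∑ q : 𝒴 × 𝒴, xiBar ξ q.1 q.2 = 1 := by
      have e2 : ∑ q : 𝒴 × 𝒴, ξ (q.2, q.1) = 1 := by
        rw [← hξ1]
        exact (Equiv.prodComm 𝒴 𝒴).sum_comp ξ
      simp only [xiBar, ← Finset.sum_div, Finset.sum_add_distrib, e2, Prod.mk.eta, hξ1]
      norm_num
    rw [Fintype.sum_prod_type]
    simp only [← Finset.mul_sum, e1, mul_one, hν1]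
  have hp0 : ∀ m : Multiset (𝒳 × 𝒴 × 𝒴),
      0 ≤ (m.map fun p => ν p.1 * xiBar ξ p.2.1 p.2.2).prod := by
    intro m
    apply Multiset.prod_nonneg
    intro a ha
    obtain ⟨b, _, rfl⟩ := Multiset.mem_map.1 ha
    exact hx0 b
  have ho0 : ∀ m : Multiset (𝒳 × 𝒴 × 𝒴), 0 ≤ ordCoeff m := by
    intro m
    unfold ordCoeff
    positivity
  refine ⟨fun τ => ?_, ?_⟩
  · unfold eta1
    exact mul_nonneg (mul_nonneg (mul_nonneg (hν0 _) (hQ0 _)) (ho0 _)) (hp0 _)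
  · have h := aux_summable_mult Q hQ0 hQm _ hx0 hx1
    have hs : Summable ν := Summable.of_finite
    have := hs.mul_of_nonneg h hν0 (fun m => mul_nonneg (mul_nonneg (mul_nonneg (hQ0 _) (ho0 _))
      (hp0 _)) (Nat.cast_nonneg _))
    refine this.congr fun τ => ?_
    simp only [eta1, deg]
    ring

/-- **Absolute continuity of the neighbor–root marginals (Lemma `pirllpieta`).**
If `μ` is a pmf on `T1` with mean degree `β ∈ (0, ∞)`, `η₁` is the law with degree
distribution `Q` and i.i.d. marks, and `μ ≪ η₁`, then `μ̄^{1,o} ≪ η̄₁^{1,o}` and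
consequently `H(μ̄^{1,o} ‖ η̄₁^{1,o}) < ∞`. -/
theorem nbrRoot_absolutelyContinuous_and_relEnt_lt_top
    {𝒳 𝒴 : Type} [Fintype 𝒳] [Fintype 𝒴] [DecidableEq 𝒳] [DecidableEq 𝒴]
    (ν : 𝒳 → ℝ) (hν0 : ∀ x, 0 ≤ ν x) (hν1 : ∑ x, ν x = 1)
    (ξ : 𝒴 × 𝒴 → ℝ) (hξ0 : ∀ p, 0 ≤ ξ p) (hξ1 : ∑ p : 𝒴 × 𝒴, ξ p = 1)
    (Q : ℕ → ℝ) (hQ0 : ∀ k, 0 ≤ Q k) (hQ1 : HasSum Q 1)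
    (hQm : Summable fun k : ℕ => (k : ℝ) * Q k)
    (hQpos : 0 < ∑' k : ℕ, (k : ℝ) * Q k)
    (μ : T1 𝒳 𝒴 → ℝ) (hμ0 : ∀ τ, 0 ≤ μ τ) (hμ1 : HasSum μ 1)
    (hβfin : Summable fun τ : T1 𝒳 𝒴 => μ τ * (deg τ : ℝ))
    (hβpos : 0 < meanDeg μ)
    (habs : ∀ τ, eta1 ν ξ Q τ = 0 → μ τ = 0) :
    (∀ p : (𝒳 × 𝒴) × (𝒳 × 𝒴), nbrRoot (eta1 ν ξ Q) p = 0 → nbrRoot μ p = 0) ∧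
      relEnt (nbrRoot μ) (nbrRoot (eta1 ν ξ Q)) ≠ ⊤ := by
  obtain ⟨he0, hes⟩ := aux_summable ν hν0 hν1 ξ hξ0 hξ1 Q hQ0 hQm
  have hac : ∀ p : (𝒳 × 𝒴) × (𝒳 × 𝒴), nbrRoot (eta1 ν ξ Q) p = 0 → nbrRoot μ p = 0 := by
    intro p hp
    by_contra hne
    have hex : ∃ m : Multiset (𝒳 × 𝒴 × 𝒴),
        μ (p.2.1, m) * (m.count (p.1.1, p.1.2, p.2.2) : ℝ) ≠ 0 := by
      by_contra hall
      push Not at hall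
      apply hne
      unfold nbrRoot
      simp only [hall, tsum_zero, mul_zero]
    obtain ⟨m, hm⟩ := hex
    have hμm := left_ne_zero_of_mul hm
    have hcm : 0 < m.count (p.1.1, p.1.2, p.2.2) :=
      Nat.pos_of_ne_zero fun h => right_ne_zero_of_mul hm (by rw [h, Nat.cast_zero])
    have hem : 0 < eta1 ν ξ Q (p.2.1, m) :=
      lt_of_le_of_ne (he0 _) fun h => hμm (habs _ h.symm)
    have hd : 0 < deg ((p.2.1, m) : T1 𝒳 𝒴) := lt_of_lt_of_le hcm (Multiset.count_le_card _ _)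
    have hmd : 0 < meanDeg (eta1 ν ξ Q) :=
      hes.tsum_pos (fun τ => mul_nonneg (he0 τ) (Nat.cast_nonneg _)) (p.2.1, m)
        (mul_pos hem (Nat.cast_pos.2 hd))
    have hs1 : Summable fun m : Multiset (𝒳 × 𝒴 × 𝒴) =>
        eta1 ν ξ Q (p.2.1, m) * (m.count (p.1.1, p.1.2, p.2.2) : ℝ) := by
      refine Summable.of_nonneg_of_le (fun m => mul_nonneg (he0 _) (Nat.cast_nonneg _))
        (fun m => ?_) (hes.comp_injective (Prod.mk_right_injective p.2.1))
      exact mul_le_mul_of_nonneg_left (Nat.cast_le.2 (Multiset.count_le_card _ _)) (he0 _)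
    have hpos : 0 < nbrRoot (eta1 ν ξ Q) p :=
      mul_pos (one_div_pos.2 hmd) (hs1.tsum_pos
        (fun m => mul_nonneg (he0 _) (Nat.cast_nonneg _)) m (mul_pos hem (Nat.cast_pos.2 hcm)))
    exact hpos.ne' hp
  refine ⟨hac, ?_⟩
  unfold relEnt
  rw [if_pos ⟨hac, Summable.of_finite⟩]
  exact ENNReal.ofReal_ne_top
end
end

section
/- Let μ be a probability mass function on T₁ with 0 < β := Σ_τ μ(τ)·deg(τ) < ∞, let η₁ be the law on T₁ with degree distribution Q and i.i.d. marks, where Q has finite nonzero mean, and assume μ is absolutely continuous with respect to η₁. Then μ̌ is a probability mass function on T₁, i.e. Σ_{(x,m)∈T₁} η₁(x,m)·∏_{(a,y,y′)∈m} (μ̄¹(a,y)/η̄₁¹(a,y)) = 1. -/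
open scoped BigOperators ENNReal Classical

noncomputable section

section Helpers

lemma hasSum_of_pointwise {ι : Type} {f g : ι → ℝ} {a : ℝ} (hg : HasSum g a)
    (h : ∀ i, f i = g i) : HasSum f a := by
  have e : f = g := funext h
  rw [e]
  exact hg

set_option linter.unusedSectionVars false

variable {𝒳 𝒴 : Type} [Fintype 𝒳] [Fintype 𝒴] [DecidableEq 𝒳] [DecidableEq 𝒴]

lemma ordCoeff_eq_univ (m : Multiset (𝒳 × 𝒴 × 𝒴)) :
    ordCoeff m = (Nat.factorial (Multiset.card m) : ℝ) /
      ∏ s, (Nat.factorial (m.count s) : ℝ) := by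
  unfold ordCoeff
  congr 1
  apply Finset.prod_subset (Finset.subset_univ _)
  intro s _ hs
  rw [Multiset.mem_toFinset] at hs
  simp [Multiset.count_eq_zero_of_notMem hs]

lemma ordCoeff_nonneg (m : Multiset (𝒳 × 𝒴 × 𝒴)) : 0 ≤ ordCoeff m := by
  unfold ordCoeff; positivity

lemma ordCoeff_cons (s : 𝒳 × 𝒴 × 𝒴) (m : Multiset (𝒳 × 𝒴 × 𝒴)) :
    ordCoeff (s ::ₘ m) * ((s ::ₘ m).count s : ℝ) = (Multiset.card m + 1 : ℝ) * ordCoeff m := by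
  rw [ordCoeff_eq_univ, ordCoeff_eq_univ, ← Finset.mul_prod_erase _ _ (Finset.mem_univ s),
    ← Finset.mul_prod_erase Finset.univ (fun t => (Nat.factorial (m.count t) : ℝ))
      (Finset.mem_univ s)]
  have h : ∏ t ∈ Finset.univ.erase s, (Nat.factorial ((s ::ₘ m).count t) : ℝ)
      = ∏ t ∈ Finset.univ.erase s, (Nat.factorial (m.count t) : ℝ) := by
    apply Finset.prod_congr rfl
    intro t ht
    rw [Multiset.count_cons_of_ne (Finset.ne_of_mem_erase ht)]
  rw [h]
  have hP : ∏ t ∈ Finset.univ.erase s, (Nat.factorial (m.count t) : ℝ) ≠ 0 :=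
    Finset.prod_ne_zero_iff.2 fun t _ => by positivity
  have hc : (Nat.factorial (m.count s) : ℝ) ≠ 0 := by positivity
  have hc' : (m.count s : ℝ) + 1 ≠ 0 := by positivity
  rw [Multiset.count_cons_self, Multiset.card_cons, Nat.factorial_succ, Nat.factorial_succ]
  push_cast
  field_simp

lemma ordCoeff_eq_countPerms (m : Multiset (𝒳 × 𝒴 × 𝒴)) :
    ordCoeff m = (m.countPerms : ℝ) := by
  unfold ordCoeff Multiset.countPerms
  rw [Finsupp.multinomial_eq, Nat.multinomial, Nat.cast_div
    (Nat.prod_factorial_dvd_factorial_sum _ _) (by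
      exact_mod_cast (Nat.prod_factorial_pos _ _).ne')]
  simp

lemma multinomial_sym (p : 𝒳 × 𝒴 × 𝒴 → ℝ) (hp1 : ∑ s, p s = 1) (k : ℕ) :
    ∑ m : Sym (𝒳 × 𝒴 × 𝒴) k, ordCoeff m.1 * (m.1.map p).prod = 1 := by
  have h := Finset.sum_pow (s := (Finset.univ : Finset (𝒳 × 𝒴 × 𝒴))) p k
  rw [hp1, one_pow] at h
  rw [h]
  simp only [Finset.sym_univ, ordCoeff_eq_countPerms]

lemma hasSum_weight (p : 𝒳 × 𝒴 × 𝒴 → ℝ) (hp0 : ∀ s, 0 ≤ p s) (hp1 : ∑ s, p s = 1)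
    (Q : ℕ → ℝ) (hQ0 : ∀ k, 0 ≤ Q k) (c : ℝ) (hQ : HasSum Q c) :
    HasSum (fun m : Multiset (𝒳 × 𝒴 × 𝒴) =>
      Q (Multiset.card m) * ordCoeff m * (m.map p).prod) c := by
  rw [← (Equiv.sigmaFiberEquiv (Multiset.card (α := 𝒳 × 𝒴 × 𝒴))).hasSum_iff]
  have hf : ∀ k : ℕ, HasSum (fun m : {m : Multiset (𝒳 × 𝒴 × 𝒴) // Multiset.card m = k} =>
      Q (Multiset.card m.1) * ordCoeff m.1 * (m.1.map p).prod) (Q k) := by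
    intro k
    have h1 := hasSum_fintype (fun m : Sym (𝒳 × 𝒴 × 𝒴) k =>
      Q k * (ordCoeff m.1 * (m.1.map p).prod))
    rw [← Finset.mul_sum, multinomial_sym p hp1 k, mul_one] at h1
    refine hasSum_of_pointwise h1 fun m => ?_
    rw [m.2, mul_assoc]
  have hn : ∀ m : Multiset (𝒳 × 𝒴 × 𝒴),
      0 ≤ Q (Multiset.card m) * ordCoeff m * (m.map p).prod := fun m =>
    mul_nonneg (mul_nonneg (hQ0 _) (ordCoeff_nonneg _))
      (Multiset.prod_nonneg (by
        intro a ha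
        obtain ⟨s, _, rfl⟩ := Multiset.mem_map.1 ha
        exact hp0 s))
  refine HasSum.sigma_of_hasSum hQ hf ?_
  refine (summable_sigma_of_nonneg (fun _ => hn _)).2 ?_
  refine ⟨fun k => (hf k).summable, ?_⟩
  convert hQ.summable using 1
  funext k
  exact (hf k).tsum_eq

lemma hasSum_weight_count (p : 𝒳 × 𝒴 × 𝒴 → ℝ) (hp0 : ∀ s, 0 ≤ p s) (hp1 : ∑ s, p s = 1)
    (Q : ℕ → ℝ) (hQ0 : ∀ k, 0 ≤ Q k) (c : ℝ) (hQ : HasSum (fun k : ℕ => (k : ℝ) * Q k) c)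
    (s : 𝒳 × 𝒴 × 𝒴) :
    HasSum (fun m : Multiset (𝒳 × 𝒴 × 𝒴) =>
      Q (Multiset.card m) * ordCoeff m * (m.map p).prod * (m.count s : ℝ)) (p s * c) := by
  have hinj : Function.Injective (fun m : Multiset (𝒳 × 𝒴 × 𝒴) => s ::ₘ m) :=
    fun a b h => (Multiset.cons_inj_right s).1 h
  rw [← hinj.hasSum_iff]
  · have hQ' : HasSum (fun k : ℕ => ((k : ℝ) + 1) * Q (k + 1)) c := by
      have := (hasSum_nat_add_iff' (f := fun k : ℕ => (k : ℝ) * Q k) 1).2 hQ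
      simpa using this
    have h := (hasSum_weight p hp0 hp1 (fun k : ℕ => ((k : ℝ) + 1) * Q (k + 1))
      (fun k => mul_nonneg (by positivity) (hQ0 _)) c hQ').mul_left (p s)
    refine hasSum_of_pointwise h fun m => ?_
    have := ordCoeff_cons s m
    simp only [Function.comp, Multiset.map_cons, Multiset.prod_cons, Multiset.card_cons]
    linear_combination (Q (Multiset.card m + 1) * p s * (m.map p).prod) * this
  · intro m hm
    have : s ∉ m := by
      intro h
      obtain ⟨t, rfl⟩ := Multiset.exists_cons_of_mem h
      exact hm ⟨t, rfl⟩
    simp [Multiset.count_eq_zero_of_notMem this]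

/-- Single-neighbor law. -/
def nbrLaw (ν : 𝒳 → ℝ) (ξ : 𝒴 × 𝒴 → ℝ) (p : 𝒳 × 𝒴 × 𝒴) : ℝ := ν p.1 * xiBar ξ p.2.1 p.2.2

lemma nbrLaw_nonneg (ν : 𝒳 → ℝ) (hν0 : ∀ x, 0 ≤ ν x) (ξ : 𝒴 × 𝒴 → ℝ) (hξ0 : ∀ p, 0 ≤ ξ p)
    (s : 𝒳 × 𝒴 × 𝒴) : 0 ≤ nbrLaw ν ξ s := by
  unfold nbrLaw xiBar
  have := hξ0 (s.2.1, s.2.2)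
  have := hξ0 (s.2.2, s.2.1)
  exact mul_nonneg (hν0 _) (by linarith)

lemma nbrLaw_sum (ν : 𝒳 → ℝ) (hν1 : ∑ x, ν x = 1)
    (ξ : 𝒴 × 𝒴 → ℝ) (hξ1 : ∑ p : 𝒴 × 𝒴, ξ p = 1) :
    ∑ s : 𝒳 × 𝒴 × 𝒴, nbrLaw ν ξ s = 1 := by
  have h : ∑ q : 𝒴 × 𝒴, xiBar ξ q.1 q.2 = 1 := by
    unfold xiBar
    rw [← Finset.sum_div, Finset.sum_add_distrib]
    have h2 : ∑ q : 𝒴 × 𝒴, ξ (q.2, q.1) = 1 := by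
      rw [← hξ1]
      exact Equiv.sum_comp (Equiv.prodComm 𝒴 𝒴) ξ
    rw [h2]
    simp only [Prod.mk.eta, hξ1]
    norm_num
  unfold nbrLaw
  rw [Fintype.sum_prod_type]
  simp only [← Finset.mul_sum, h, mul_one, hν1]

lemma meanDeg_eta1 (ν : 𝒳 → ℝ) (hν0 : ∀ x, 0 ≤ ν x) (hν1 : ∑ x, ν x = 1)
    (ξ : 𝒴 × 𝒴 → ℝ) (hξ0 : ∀ p, 0 ≤ ξ p) (hξ1 : ∑ p : 𝒴 × 𝒴, ξ p = 1)
    (Q : ℕ → ℝ) (hQ0 : ∀ k, 0 ≤ Q k) (c : ℝ) (hQ : HasSum (fun k : ℕ => (k : ℝ) * Q k) c) :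
    meanDeg (eta1 ν ξ Q) = c := by
  have h := hasSum_weight (nbrLaw ν ξ) (nbrLaw_nonneg ν hν0 ξ hξ0) (nbrLaw_sum ν hν1 ξ hξ1)
    (fun k : ℕ => (k : ℝ) * Q k) (fun k => mul_nonneg (by positivity) (hQ0 k)) c hQ
  have h2 := hasSum_fintype ν
  rw [hν1] at h2
  have h3 := h2.mul h (h2.summable.mul_of_nonneg h.summable hν0 (fun m => mul_nonneg (mul_nonneg
    (mul_nonneg (by positivity) (hQ0 _)) (ordCoeff_nonneg _)) (Multiset.prod_nonneg (by
        intro a ha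
        obtain ⟨s, _, rfl⟩ := Multiset.mem_map.1 ha
        exact nbrLaw_nonneg ν hν0 ξ hξ0 s))))
  rw [one_mul] at h3
  unfold meanDeg
  rw [← h3.tsum_eq]
  apply tsum_congr
  intro τ
  unfold eta1 deg nbrLaw
  ring

lemma marg1_eta1 (ν : 𝒳 → ℝ) (hν0 : ∀ x, 0 ≤ ν x) (hν1 : ∑ x, ν x = 1)
    (ξ : 𝒴 × 𝒴 → ℝ) (hξ0 : ∀ p, 0 ≤ ξ p) (hξ1 : ∑ p : 𝒴 × 𝒴, ξ p = 1)
    (Q : ℕ → ℝ) (hQ0 : ∀ k, 0 ≤ Q k)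
    (hQm : Summable fun k : ℕ => (k : ℝ) * Q k)
    (hQpos : 0 < ∑' k : ℕ, (k : ℝ) * Q k) (u : 𝒳 × 𝒴) :
    marg1 (eta1 ν ξ Q) u = ∑ y', nbrLaw ν ξ (u.1, u.2, y') := by
  have hn : ∀ v : 𝒳 × 𝒴, nbrRoot (eta1 ν ξ Q) (u, v) = ν v.1 * nbrLaw ν ξ (u.1, u.2, v.2) := by
    intro v
    unfold nbrRoot
    rw [meanDeg_eta1 ν hν0 hν1 ξ hξ0 hξ1 Q hQ0 _ hQm.hasSum]
    have h := (hasSum_weight_count (nbrLaw ν ξ) (nbrLaw_nonneg ν hν0 ξ hξ0)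
      (nbrLaw_sum ν hν1 ξ hξ1) Q hQ0 _ hQm.hasSum (u.1, u.2, v.2)).mul_left (ν v.1)
    have h' : ∑' m : Multiset (𝒳 × 𝒴 × 𝒴),
        eta1 ν ξ Q (v.1, m) * (m.count (u.1, u.2, v.2) : ℝ) =
        ν v.1 * (nbrLaw ν ξ (u.1, u.2, v.2) * ∑' k : ℕ, (k : ℝ) * Q k) := by
      rw [← h.tsum_eq]
      apply tsum_congr
      intro m
      unfold eta1 nbrLaw
      ring
    rw [h']
    field_simp
  unfold marg1
  simp only [hn]
  rw [Fintype.sum_prod_type]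
  simp only [← Finset.mul_sum]
  rw [← Finset.sum_mul, hν1, one_mul]

lemma marg1_nonneg (μ : T1 𝒳 𝒴 → ℝ) (hμ0 : ∀ τ, 0 ≤ μ τ) (hβpos : 0 < meanDeg μ) (u : 𝒳 × 𝒴) :
    0 ≤ marg1 μ u := by
  unfold marg1 nbrRoot
  refine Finset.sum_nonneg fun v _ => mul_nonneg (by positivity) (tsum_nonneg fun m =>
    mul_nonneg (hμ0 _) (by positivity))

lemma marg1_sum (μ : T1 𝒳 𝒴 → ℝ) (hμ0 : ∀ τ, 0 ≤ μ τ)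
    (hβfin : Summable fun τ : T1 𝒳 𝒴 => μ τ * (deg τ : ℝ))
    (hβpos : 0 < meanDeg μ) : ∑ u, marg1 μ u = 1 := by
  have hb : ∀ b, Summable fun m : Multiset (𝒳 × 𝒴 × 𝒴) => μ (b, m) * (Multiset.card m : ℝ) :=
    fun b => hβfin.comp_injective (Prod.mk_right_injective b)
  have hs : ∀ b s, Summable fun m : Multiset (𝒳 × 𝒴 × 𝒴) => μ (b, m) * (m.count s : ℝ) := by
    intro b s
    refine Summable.of_nonneg_of_le (fun m => mul_nonneg (hμ0 _) (by positivity)) (fun m => ?_) (hb b)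
    exact mul_le_mul_of_nonneg_left (by exact_mod_cast Multiset.count_le_card s m) (hμ0 _)
  have key : ∀ b, ∑ s : 𝒳 × 𝒴 × 𝒴, ∑' m : Multiset (𝒳 × 𝒴 × 𝒴), μ (b, m) * (m.count s : ℝ)
      = ∑' m : Multiset (𝒳 × 𝒴 × 𝒴), μ (b, m) * (Multiset.card m : ℝ) := by
    intro b
    rw [← Summable.tsum_finsetSum (fun s _ => hs b s)]
    apply tsum_congr
    intro m
    rw [← Finset.mul_sum, ← Nat.cast_sum, Multiset.sum_count_eq_card (fun a _ => Finset.mem_univ a)]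
  have hβ : meanDeg μ = ∑ b, ∑' m : Multiset (𝒳 × 𝒴 × 𝒴), μ (b, m) * (Multiset.card m : ℝ) := by
    unfold meanDeg
    rw [hβfin.tsum_prod, tsum_fintype]
    rfl
  have e : ∑ u, marg1 μ u = (1 / meanDeg μ) * ∑ b, ∑ s : 𝒳 × 𝒴 × 𝒴,
      ∑' m : Multiset (𝒳 × 𝒴 × 𝒴), μ (b, m) * (m.count s : ℝ) := by
    unfold marg1 nbrRoot
    simp only [Fintype.sum_prod_type, ← Finset.mul_sum]
    congr 1
    rw [Finset.sum_congr rfl fun a _ => Finset.sum_comm, Finset.sum_comm]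
  rw [e, Finset.sum_congr rfl fun b _ => key b, ← hβ]
  field_simp

end Helpers

/-- **`μ̌` is a probability measure.**
If `μ` is a pmf on `T1` with mean degree `β ∈ (0, ∞)`, `η₁` is the law with degree
distribution `Q` and i.i.d. marks, and `μ ≪ η₁`, then
`∑_{(x,m)} η₁ (x,m) · ∏_{(a,y,y') ∈ m} μ̄¹(a,y)/η̄₁¹(a,y) = 1`, i.e. `μ̌` is a pmf. -/
theorem muCheck_is_probability
    {𝒳 𝒴 : Type} [Fintype 𝒳] [Fintype 𝒴] [DecidableEq 𝒳] [DecidableEq 𝒴]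
    (ν : 𝒳 → ℝ) (hν0 : ∀ x, 0 ≤ ν x) (hν1 : ∑ x, ν x = 1)
    (ξ : 𝒴 × 𝒴 → ℝ) (hξ0 : ∀ p, 0 ≤ ξ p) (hξ1 : ∑ p : 𝒴 × 𝒴, ξ p = 1)
    (Q : ℕ → ℝ) (hQ0 : ∀ k, 0 ≤ Q k) (hQ1 : HasSum Q 1)
    (hQm : Summable fun k : ℕ => (k : ℝ) * Q k)
    (hQpos : 0 < ∑' k : ℕ, (k : ℝ) * Q k)
    (μ : T1 𝒳 𝒴 → ℝ) (hμ0 : ∀ τ, 0 ≤ μ τ) (hμ1 : HasSum μ 1)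
    (hβfin : Summable fun τ : T1 𝒳 𝒴 => μ τ * (deg τ : ℝ))
    (hβpos : 0 < meanDeg μ)
    (habs : ∀ τ, eta1 ν ξ Q τ = 0 → μ τ = 0) :
    HasSum (muCheck ν ξ Q μ) 1 := by
  have hp0 := nbrLaw_nonneg ν hν0 ξ hξ0
  have hp1 := nbrLaw_sum ν hν1 ξ hξ1
  have hη := marg1_eta1 ν hν0 hν1 ξ hξ0 hξ1 Q hQ0 hQm hQpos
  have hη0 : ∀ u, 0 ≤ marg1 (eta1 ν ξ Q) u := fun u => by
    rw [hη]; exact Finset.sum_nonneg fun _ _ => hp0 _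
  have hm0 := marg1_nonneg μ hμ0 hβpos
  -- absolute continuity of the marginals
  have hac : ∀ u, marg1 (eta1 ν ξ Q) u = 0 → marg1 μ u = 0 := by
    intro u hu
    rw [hη, Finset.sum_eq_zero_iff_of_nonneg (fun _ _ => hp0 _)] at hu
    unfold marg1 nbrRoot
    refine Finset.sum_eq_zero fun v _ => ?_
    have hz : ∀ m : Multiset (𝒳 × 𝒴 × 𝒴), μ (v.1, m) * (m.count (u.1, u.2, v.2) : ℝ) = 0 := by
      intro m
      by_cases hmem : (u.1, u.2, v.2) ∈ m
      · rw [habs (v.1, m), zero_mul]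
        unfold eta1
        have : (m.map fun p => ν p.1 * xiBar ξ p.2.1 p.2.2).prod = 0 :=
          Multiset.prod_eq_zero (Multiset.mem_map.2 ⟨_, hmem, hu v.2 (Finset.mem_univ _)⟩)
        simp only [this, mul_zero]
      · simp [Multiset.count_eq_zero_of_notMem hmem]
    simp only [hz, tsum_zero, mul_zero]
  let r : 𝒳 × 𝒴 × 𝒴 → ℝ := fun p =>
    nbrLaw ν ξ p * (marg1 μ (p.1, p.2.1) / marg1 (eta1 ν ξ Q) (p.1, p.2.1))
  have hr0 : ∀ s, 0 ≤ r s := fun s => mul_nonneg (hp0 s) (div_nonneg (hm0 _) (hη0 _))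
  have hr1 : ∑ s, r s = 1 := by
    rw [← marg1_sum μ hμ0 hβfin hβpos]
    simp only [Fintype.sum_prod_type, r, ← Finset.sum_mul]
    refine Finset.sum_congr rfl fun a _ => Finset.sum_congr rfl fun y _ => ?_
    rw [← hη (a, y)]
    by_cases h : marg1 (eta1 ν ξ Q) (a, y) = 0
    · rw [hac _ h]; simp
    · field_simp
  have h := hasSum_weight r hr0 hr1 Q hQ0 1 hQ1
  have h2 := hasSum_fintype ν
  rw [hν1] at h2
  have h3 := h2.mul h (h2.summable.mul_of_nonneg h.summable hν0 (fun m => mul_nonneg (mul_nonneg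
    (hQ0 _) (ordCoeff_nonneg _)) (Multiset.prod_nonneg (by
        intro a ha
        obtain ⟨s, _, rfl⟩ := Multiset.mem_map.1 ha
        exact hr0 s))))
  rw [one_mul] at h3
  refine hasSum_of_pointwise h3 fun τ => ?_
  simp only [muCheck, eta1, r, Multiset.prod_map_mul, nbrLaw]
  ring
end
end
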